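/- arXiv:2512.12714 — 5 statements merged into one kernel-verified Lean document; each statement's English description precedes it below -/
import Mathlib

section
/- Let S be a commutative ring, I ⊆ S an ideal, n ≥ 1 a natural number, and M an n×n matrix over S whose image in the matrix ring over S/I is nilpotent. Then for every k ≥ 1 there exists N such that for all m ≥ N, every entry of the matrix power M^m lies in the ideal power I^k. (In particular, the powers of M converge to 0 in the I-adic topology.) -/
section MatrixIdeal

variable {R ι : Type*} [Fintype ι] [DecidableEq ι]

theorem matrix_mul_matrix_le [Semiring R] (I J : Ideal R) :
    I.matrix ι * J.matrix ι ≤ (I * J).matrix ι :=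
  Ideal.mul_le.2 fun A hA B hB i j => by
    rw [Matrix.mul_apply]
    exact Ideal.sum_mem _ fun l _ => Ideal.mul_mem_mul (hA i l) (hB l j)

theorem matrix_pow_le [Semiring R] (I : Ideal R) (k : ℕ) :
    I.matrix ι ^ k ≤ (I ^ k).matrix ι := by
  induction k with
  | zero => simp only [Submodule.pow_zero, Ideal.one_eq_top, Ideal.matrix_top, le_refl]
  | succ k ih =>
    calc I.matrix ι ^ (k + 1)
      _ = I.matrix ι ^ k * I.matrix ι := Submodule.pow_succ _
      _ ≤ (I ^ k).matrix ι * I.matrix ι := Ideal.mul_mono_left ih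
      _ ≤ (I ^ k * I).matrix ι := matrix_mul_matrix_le _ _
      _ = (I ^ (k + 1)).matrix ι := by rw [Submodule.pow_succ]

theorem pow_mem_matrix_pow_of_pow_mem [Semiring R] {I : Ideal R} {M : Matrix ι ι R} {r k m : ℕ}
    (hM : M ^ r ∈ I.matrix ι) (hm : r * k ≤ m) : M ^ m ∈ (I ^ k).matrix ι := by
  have hMrk : M ^ (r * k) ∈ (I ^ k).matrix ι := by
    rw [pow_mul]
    exact matrix_pow_le I k (Ideal.pow_mem_pow hM k)
  exact Ideal.pow_mem_of_pow_mem _ hMrk hm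

theorem ker_mapMatrix {S : Type*} [Semiring R] [Semiring S] (f : R →+* S) :
    RingHom.ker (f.mapMatrix : Matrix ι ι R →+* Matrix ι ι S) = (RingHom.ker f).matrix ι := by
  ext A
  simp only [RingHom.mem_ker, RingHom.mapMatrix_apply, ← Matrix.ext_iff, Matrix.map_apply,
    Matrix.zero_apply, Ideal.mem_matrix]

theorem matrix_power_entries_in_ideal_power_general [Ring R] (I : Ideal R) [I.IsTwoSided]
    (M : Matrix ι ι R) (hnil : IsNilpotent (M.map (Ideal.Quotient.mk I))) :
    ∃ r : ℕ, ∀ k m : ℕ, r * k ≤ m → ∀ i j : ι, (M ^ m) i j ∈ I ^ k := by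
  obtain ⟨r, hr⟩ := hnil
  have hMr : M ^ r ∈ (RingHom.ker (Ideal.Quotient.mk I)).matrix ι := by
    rwa [← ker_mapMatrix, RingHom.mem_ker, map_pow]
  rw [Ideal.mk_ker] at hMr
  exact ⟨r, fun _ _ hm => pow_mem_matrix_pow_of_pow_mem hMr hm⟩

end MatrixIdeal

theorem matrix_power_entries_in_ideal_power
    {S : Type*} [CommRing S] (I : Ideal S) (n : ℕ) (hn : 1 ≤ n)
    (M : Matrix (Fin n) (Fin n) S)
    (hnil : IsNilpotent (M.map (Ideal.Quotient.mk I))) :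
    ∀ k : ℕ, 1 ≤ k → ∃ N : ℕ, ∀ m : ℕ, N ≤ m → ∀ i j : Fin n, (M ^ m) i j ∈ I ^ k := by
  obtain ⟨r, hr⟩ := matrix_power_entries_in_ideal_power_general I M hnil
  exact fun k _ => ⟨r * k, hr k⟩
end

section
/- Every entry of the matrix A⁸ lies in the ideal I = (3, h) of R; consequently the image of A in M₈(R/I) is nilpotent (indeed its 8th power is zero). -/
noncomputable section

instance : Fact (Nat.Prime 3) := ⟨by norm_num⟩

/-- The 3-adic integers. -/
abbrev Z3 : Type := ℤ_[3]

/-- The power series ring `ℤ₃⟦h⟧`. -/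
abbrev S3 : Type := PowerSeries Z3

/-- The power series variable `h`. -/
def hS : S3 := PowerSeries.X

open Polynomial in
/-- The polynomial `X² + 1 − h` over `ℤ₃⟦h⟧`. -/
def pR : Polynomial S3 := X ^ 2 + C (1 - hS)

/-- The ring `R = ℤ₃⟦h⟧[c]/(c² + 1 − h)`. -/
abbrev R : Type := AdjoinRoot pR

/-- The square root `c` of `h − 1` in `R`. -/
def c : R := AdjoinRoot.root pR

/-- The element `h` of `R`. -/
def h : R := AdjoinRoot.of pR hS

/-- The ideal `I = (3, h)` of `R`. -/
def I : Ideal R := Ideal.span {(3 : R), h}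

/-- The last column of the companion matrix `A`. -/
def lastCol : Fin 8 → R :=
  ![3, 3 * c, h - 9, -9 * c, -6 * h + 12, -(h + 6) * c, -3 * h + 3, -3 * c]

/-- The companion matrix `A`. -/
def A : Matrix (Fin 8) (Fin 8) R :=
  Matrix.of fun i j => if j = (7 : Fin 8) then lastCol i
    else if (i : ℕ) = (j : ℕ) + 1 then 1 else 0

/-- The matrix `B`. -/
def B : Matrix (Fin 8) (Fin 8) R :=
  Ring.inverse (h - 17) •
    ( (c * (6 * h ^ 2 - 111 * h + 361)) • A ^ 7
    + (17 * h ^ 3 - 334 * h ^ 2 + 1377 * h - 1124) • A ^ 6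
    + (3 * c * (5 * h ^ 3 - 99 * h ^ 2 + 416 * h - 354)) • A ^ 5
    + (3 * h ^ 4 - 18 * h ^ 3 - 566 * h ^ 2 + 3134 * h - 2617) • A ^ 4
    + (c * (h ^ 4 - 56 * h ^ 3 + 855 * h ^ 2 - 4069 * h + 5509)) • A ^ 3
    + (3 * h ^ 4 - 114 * h ^ 3 + 1323 * h ^ 2 - 4564 * h + 3032) • A ^ 2
    + (3 * c * (h ^ 3 - 17 * h ^ 2 + 48 * h - 128)) • A
    + (h ^ 4 - 44 * h ^ 3 + 579 * h ^ 2 - 2301 * h + 1557) • (1 : Matrix (Fin 8) (Fin 8) R))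

section PowersModuloIdeal

variable {n α : Type*} [Fintype n] [DecidableEq n]

-- Modulo `J`, `M` strictly raises the degree `d` of basis vectors, so `M ^ k` raises it by `k`.
lemma pow_apply_mem_of_lt_add [Semiring α] {J : Ideal α} [J.IsTwoSided] {M : Matrix n n α}
    {d : n → ℕ} (hM : ∀ i j, d i ≤ d j → M i j ∈ J) (k : ℕ) {i j : n} (hij : d i < d j + k) :
    (M ^ k) i j ∈ J := by
  induction k generalizing i with
  | zero =>
    have hne : i ≠ j := by
      rintro rfl
      exact lt_irrefl _ hij
    rw [pow_zero, Matrix.one_apply_ne hne]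
    exact J.zero_mem
  | succ k ih =>
    rw [pow_succ', Matrix.mul_apply]
    refine J.sum_mem fun l _ => ?_
    rcases le_or_gt (d i) (d l) with hil | hli
    · exact J.mul_mem_right _ (hM i l hil)
    · exact J.mul_mem_left _ (ih (by omega))

lemma map_quotientMk_pow_eq_zero_iff [Ring α] {J : Ideal α} [J.IsTwoSided] {M : Matrix n n α}
    {k : ℕ} :
    M.map (Ideal.Quotient.mk J) ^ k = 0 ↔ ∀ i j, (M ^ k) i j ∈ J := by
  simp only [← Matrix.map_pow, ← Matrix.ext_iff, Matrix.map_apply, Matrix.zero_apply,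
    Ideal.Quotient.eq_zero_iff_mem]

end PowersModuloIdeal

lemma lastCol_eq_three_smul_add_h_smul :
    lastCol = (3 : R) • ![1, c, -3, -3 * c, 4, -2 * c, 1, -c] +
      h • ![0, 0, 1, 0, -6, -c, -3, 0] := by
  ext i
  fin_cases i <;> simp [lastCol] <;> ring

lemma lastCol_mem_I (i : Fin 8) : lastCol i ∈ I := by
  have three_mem : (3 : R) ∈ I := Ideal.subset_span (by simp)
  have h_mem : h ∈ I := Ideal.subset_span (by simp)
  simp only [lastCol_eq_three_smul_add_h_smul, Pi.add_apply, Pi.smul_apply, smul_eq_mul]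
  exact I.add_mem (I.mul_mem_right _ three_mem) (I.mul_mem_right _ h_mem)

lemma A_apply_mem_I_of_le {i j : Fin 8} (hij : i ≤ j) : A i j ∈ I := by
  rw [A, Matrix.of_apply]
  split_ifs with hj hsub
  · exact lastCol_mem_I i
  · omega
  · exact I.zero_mem

theorem A_pow_eight_entries_in_I :
    (∀ i j : Fin 8, (A ^ 8) i j ∈ I) ∧
      (A.map (Ideal.Quotient.mk I)) ^ 8 = 0 := by
  have entries_mem (i j : Fin 8) : (A ^ 8) i j ∈ I :=
    pow_apply_mem_of_lt_add (d := Fin.val) (fun _ _ => A_apply_mem_I_of_le) 8 (by omega)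
  exact ⟨entries_mem, map_quotientMk_pow_eq_zero_iff.mpr entries_mem⟩
end
end

section
/- Every entry of the matrix B⁸ lies in the ideal I = (3, h) of R; consequently the image of B in M₈(R/I) is nilpotent. (This is the key step showing that for any x ∈ R, viewed as a power series in h, the substitution x(B) converges in the (3, h)-adic topology.) -/
noncomputable section

/-! Modulo `I` the last column of `A` vanishes, so `A` becomes strictly lower triangular, and so
does `B`, a polynomial in `A` with constant coefficient in `I`. The characteristic polynomial of a
strictly lower triangular `8 × 8` matrix is `X ^ 8`, so Cayley–Hamilton gives `B ^ 8 = 0` modulo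
`I`. -/

lemma mapMatrix_mk_eq_zero_iff {S n : Type*} [CommRing S] [Fintype n] [DecidableEq n]
    {J : Ideal S} {M : Matrix n n S} :
    (Ideal.Quotient.mk J).mapMatrix M = 0 ↔ M ∈ J.matrix n := by
  simp only [← Matrix.ext_iff, RingHom.mapMatrix_apply, Matrix.map_apply, Matrix.zero_apply,
    Ideal.Quotient.eq_zero_iff_mem, Ideal.mem_matrix]

section StrictlyLowerTriangular

variable {S n : Type*} [CommRing S] [Fintype n] [LinearOrder n]

open Polynomial in
lemma matrix_pow_card_eq_zero_of_strictlyLowerTriangular {M : Matrix n n S}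
    (hM : ∀ i j, i ≤ j → M i j = 0) : M ^ Fintype.card n = 0 := by
  have hupper : M.transpose.IsUpperTriangular := fun i j hji => hM j i hji.le
  have hchar : M.charpoly = X ^ Fintype.card n := by
    rw [← Matrix.charpoly_transpose, Matrix.charpoly_of_isUpperTriangular _ hupper]
    simp [hM]
  simpa [hchar] using M.aeval_self_charpoly

/-- The matrices that are strictly lower triangular modulo the ideal `J`. They form a subalgebra
without unit, so membership can be checked term by term in a polynomial expression. -/
def strictlyLowerTriangularMod (n : Type*) [Fintype n] [LinearOrder n] (J : Ideal S) :
    NonUnitalSubalgebra S (Matrix n n S) where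
  carrier := {M | ∀ i j, i ≤ j → M i j ∈ J}
  zero_mem' _ _ _ := J.zero_mem
  add_mem' hM hN i j hij := J.add_mem (hM i j hij) (hN i j hij)
  smul_mem' a _ hM i j hij := J.mul_mem_left a (hM i j hij)
  mul_mem' {M N} hM hN i j hij := by
    rw [Matrix.mul_apply]
    refine J.sum_mem fun k _ => ?_
    obtain hik | hki := le_total i k
    · exact J.mul_mem_right _ (hM i k hik)
    · exact J.mul_mem_left _ (hN k j (hki.trans hij))

namespace strictlyLowerTriangularMod

variable {J : Ideal S} {M : Matrix n n S}

lemma pow_mem (hM : M ∈ strictlyLowerTriangularMod n J) {k : ℕ} (hk : 1 ≤ k) :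
    M ^ k ∈ strictlyLowerTriangularMod n J := by
  induction k, hk using Nat.le_induction with
  | base => rwa [pow_one]
  | succ k _ ih => exact pow_succ M k ▸ mul_mem ih hM

lemma smul_mem_of_mem {a : S} (ha : a ∈ J) (M : Matrix n n S) :
    a • M ∈ strictlyLowerTriangularMod n J :=
  fun _ _ _ => J.mul_mem_right _ ha

lemma pow_card_mem_matrix (hM : M ∈ strictlyLowerTriangularMod n J) :
    M ^ Fintype.card n ∈ J.matrix n := by
  rw [← mapMatrix_mk_eq_zero_iff, map_pow]
  exact matrix_pow_card_eq_zero_of_strictlyLowerTriangular fun i j hij =>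
    Ideal.Quotient.eq_zero_iff_mem.mpr (hM i j hij)

end strictlyLowerTriangularMod

end StrictlyLowerTriangular

lemma A_mem_strictlyLowerTriangularMod_I : A ∈ strictlyLowerTriangularMod (Fin 8) I := by
  intro i j hij
  have hne : (i : ℕ) ≠ j + 1 := by lia
  by_cases hj : j = 7
  · simpa [A, hj] using lastCol_mem_I i
  · simp [A, hj, hne]

lemma B_mem_strictlyLowerTriangularMod_I : B ∈ strictlyLowerTriangularMod (Fin 8) I := by
  have hA := A_mem_strictlyLowerTriangularMod_I
  have hpow (a : R) {k : ℕ} (hk : 1 ≤ k) : a • A ^ k ∈ strictlyLowerTriangularMod (Fin 8) I :=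
    SMulMemClass.smul_mem a (strictlyLowerTriangularMod.pow_mem hA hk)
  have hconst : h ^ 4 - 44 * h ^ 3 + 579 * h ^ 2 - 2301 * h + 1557 ∈ I :=
    Ideal.mem_span_pair.mpr ⟨519, h ^ 3 - 44 * h ^ 2 + 579 * h - 2301, by ring⟩
  refine SMulMemClass.smul_mem _ (add_mem (add_mem ?_ (SMulMemClass.smul_mem _ hA))
    (strictlyLowerTriangularMod.smul_mem_of_mem hconst 1))
  iterate 5 refine add_mem ?_ (hpow _ (by decide))
  exact hpow _ (by decide)

theorem B_pow_eight_entries_in_I :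
    (∀ i j : Fin 8, (B ^ 8) i j ∈ I) ∧
      IsNilpotent (B.map (Ideal.Quotient.mk I)) := by
  have hB : B ^ 8 ∈ I.matrix (Fin 8) :=
    strictlyLowerTriangularMod.pow_card_mem_matrix B_mem_strictlyLowerTriangularMod_I
  refine ⟨hB, 8, ?_⟩
  rw [← RingHom.mapMatrix_apply, ← map_pow]
  exact mapMatrix_mk_eq_zero_iff.mpr hB
end
end

section
/- Let p be a prime, let σ be a p-cycle in the symmetric group Σ_p and P = ⟨σ⟩ the cyclic subgroup it generates, and let K = Σ_r × Σ_{p−r} ≤ Σ_p be the setwise stabilizer of a subset T of size r with 0 < r < p. Then the action of P by right multiplication on the set K\Σ_p of right cosets { Kg : g ∈ Σ_p } is free: if Kgx = Kg for some g ∈ Σ_p and x ∈ P, then x = 1. -/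
open Pointwise

/-!
A free action of a group `G` on a set restricts to a free action of the stabilizer of a finite
subset `s` on `s`, so the order of that stabilizer divides `|s|` as well as `|G|`, and the
stabilizer is trivial when `|s|` and `|G|` are coprime. For a `p`-cycle `σ`, the group `⟨σ⟩` of
order `p` acts freely, and `0 < |T| < p` makes `|T|` prime to `p`. Finally, `Kgx = Kg` says that
`g * x * g⁻¹ ∈ K`, i.e. that `x` stabilizes `g⁻¹ • T`, which has the size of `T`.
-/

section FreeAction

variable {G α : Type*} [Group G] [MulAction G α] [IsCancelSMul G α]

variable (G α) in
theorem card_dvd_card_of_isCancelSMul : Nat.card G ∣ Nat.card α := by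
  rw [Nat.card_congr (MulAction.selfEquivOrbitsQuotientProd (G := G) (X := α)
    IsCancelSMul.stabilizer_eq_bot), Nat.card_prod]
  exact dvd_mul_left _ _

theorem card_stabilizer_dvd_card [DecidableEq α] (s : Finset α) :
    Nat.card (MulAction.stabilizer G s) ∣ s.card := by
  let S : SubMulAction (MulAction.stabilizer G s) α :=
    { carrier := s
      smul_mem' := fun h a ha ↦ (MulAction.mem_stabilizer_finset.mp h.2 a).mpr ha }
  have hS : Nat.card S = s.card := Nat.card_eq_finsetCard s
  exact hS ▸ card_dvd_card_of_isCancelSMul (MulAction.stabilizer G s) S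

theorem stabilizer_eq_bot_of_coprime_card [DecidableEq α] {s : Finset α}
    (hs : (Nat.card G).Coprime s.card) : MulAction.stabilizer G s = ⊥ :=
  Subgroup.eq_bot_of_card_eq _ <| Nat.eq_one_of_dvd_coprimes hs
    (Subgroup.card_subgroup_dvd_card _) (card_stabilizer_dvd_card s)

end FreeAction

theorem subgroup_mul_singleton_eq_iff {G : Type*} [Group G] (K : Subgroup G) {a b : G} :
    (K : Set G) * {a} = (K : Set G) * {b} ↔ a * b⁻¹ ∈ K := by
  rw [eq_comm, Set.mul_singleton, Set.mul_singleton]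
  exact rightCoset_eq_iff K

theorem isCancelSMul_zpowers_of_isCycleOn_univ {α : Type*} {σ : Equiv.Perm α}
    (hσ : σ.IsCycleOn Set.univ) : IsCancelSMul (Subgroup.zpowers σ) α := by
  rw [isCancelSMul_iff_eq_one_of_smul_eq]
  rintro ⟨_, n, rfl⟩ a (ha : (σ ^ n) a = a)
  refine Subtype.ext (Equiv.ext fun b ↦ ?_)
  obtain ⟨m, rfl⟩ := hσ.2 (Set.mem_univ a) (Set.mem_univ b)
  calc (σ ^ n) ((σ ^ m) a) = (σ ^ m) ((σ ^ n) a) := Equiv.Perm.zpow_apply_comm σ n m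
    _ = (σ ^ m) a := by rw [ha]

theorem free_action_on_right_cosets_general {G α : Type*} [Group G] [MulAction G α]
    [DecidableEq α] (P : Subgroup G) [IsCancelSMul P α]
    (T : Finset α) (hT : (Nat.card P).Coprime T.card)
    (K : Subgroup G) (hK : K ≤ MulAction.stabilizer G T)
    (g x : G) (hx : x ∈ P) (hfix : (K : Set G) * {g * x} = (K : Set G) * {g}) :
    x = 1 := by
  have hconj : (g * x * g⁻¹) • T = T := hK ((subgroup_mul_singleton_eq_iff K).mp hfix)
  have hstab : (⟨x, hx⟩ : P) ∈ MulAction.stabilizer P (g⁻¹ • T) := by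
    change x • g⁻¹ • T = g⁻¹ • T
    rwa [eq_inv_smul_iff, smul_smul, smul_smul]
  rw [stabilizer_eq_bot_of_coprime_card (by rwa [Finset.card_smul_finset])] at hstab
  exact congrArg Subtype.val (Subgroup.mem_bot.mp hstab)

theorem free_action_on_right_cosets
    (p : ℕ) (hp : p.Prime) (σ : Equiv.Perm (Fin p))
    (hcyc : σ.IsCycle) (hsupp : σ.support = Finset.univ)
    (T : Finset (Fin p)) (hT0 : 0 < T.card) (hTp : T.card < p)
    (K : Subgroup (Equiv.Perm (Fin p)))
    (hK : K = MulAction.stabilizer (Equiv.Perm (Fin p)) T)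
    (g : Equiv.Perm (Fin p)) (x : Equiv.Perm (Fin p))
    (hx : x ∈ Subgroup.zpowers σ)
    (hfix : (K : Set (Equiv.Perm (Fin p))) * {g * x} =
            (K : Set (Equiv.Perm (Fin p))) * {g}) :
    x = 1 := by
  have hσ : σ.IsCycleOn Set.univ := by
    simpa [← Equiv.Perm.mem_support, hsupp] using Equiv.Perm.IsCycle.isCycleOn hcyc
  have := isCancelSMul_zpowers_of_isCycleOn_univ hσ
  have hcop : (Nat.card (Subgroup.zpowers σ)).Coprime T.card := by
    rw [Nat.card_zpowers, hcyc.orderOf, hsupp, Finset.card_fin]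
    exact Nat.coprime_of_lt_prime hT0.ne' hTp hp
  exact free_action_on_right_cosets_general (Subgroup.zpowers σ) T hcop K hK.le g x hx hfix
end

section
/- Let p be a prime. The conjugation action of the symmetric group Σ_p on the set of ordered pairs (σ, τ) of commuting elements of Σ_p satisfying σ^p = 1 and τ^p = 1 has exactly p + 2 orbits. -/
/-- Simultaneous conjugation relation on pairs of commuting `p`-torsion
permutations. -/
def simConjRel (p : ℕ)
    (x y : {st : Equiv.Perm (Fin p) × Equiv.Perm (Fin p) //
      Commute st.1 st.2 ∧ st.1 ^ p = 1 ∧ st.2 ^ p = 1}) : Prop :=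
  ∃ g : Equiv.Perm (Fin p), g * x.1.1 * g⁻¹ = y.1.1 ∧ g * x.1.2 * g⁻¹ = y.1.2

/-!
A nontrivial `σ` with `σ ^ p = 1` in the symmetric group on `n` letters, `p ≤ n < 2 * p`, is a
single `p`-cycle, so all such `σ` are conjugate to a fixed `c`. Since `p` divides `n !` exactly
once, `⟨c⟩` is a Sylow `p`-subgroup, so the only `p`-torsion elements commuting with `c` are the
powers of `c`. Hence every pair is conjugate to exactly one of `(1, 1)`, `(1, c)` and `(c, t)` with
`t ∈ ⟨c⟩`: conjugation can no longer move `t` once it fixes `c`.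
-/

open Subgroup

/-- Homomorphisms from `(ℤ/p)²` to `G`, encoded by the images of the two generators. -/
abbrev CommutingTorsionPair (G : Type*) [Monoid G] (p : ℕ) : Type _ :=
  {st : G × G // Commute st.1 st.2 ∧ st.1 ^ p = 1 ∧ st.2 ^ p = 1}

namespace CommutingTorsionPair

variable {G : Type*} [Group G] {p : ℕ} {c : G}

variable (G p) in
/-- Simultaneous conjugacy of pairs, written out so that for `G = Equiv.Perm (Fin p)` its relation
unfolds to `simConjRel p`. -/
def simConj : Setoid (CommutingTorsionPair G p) where
  r x y := ∃ g : G, g * x.1.1 * g⁻¹ = y.1.1 ∧ g * x.1.2 * g⁻¹ = y.1.2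
  iseqv :=
    { refl := fun _ => ⟨1, by simp, by simp⟩
      symm := by
        rintro x y ⟨g, h₁, h₂⟩
        exact ⟨g⁻¹, by rw [← h₁]; group, by rw [← h₂]; group⟩
      trans := by
        rintro x y z ⟨g, h₁, h₂⟩ ⟨k, h₃, h₄⟩
        exact ⟨k * g, by rw [← h₃, ← h₁]; group, by rw [← h₄, ← h₂]; group⟩ }

/-- The candidate orbit representatives attached to a `p`-torsion element `c`: the pairs `(1, 1)`,
`(1, c)`, and `(c, t)` for `t` a power of `c`. -/
def representative (hc : c ^ p = 1) : Option (Option (zpowers c)) → CommutingTorsionPair G p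
  | none => ⟨(1, 1), Commute.one_left _, one_pow _, one_pow _⟩
  | some none => ⟨(1, c), Commute.one_left _, one_pow _, hc⟩
  | some (some t) => ⟨(c, t), by
      obtain ⟨_, k, rfl⟩ := t
      exact ⟨(Commute.refl c).zpow_right k, hc, by
        rw [← zpow_natCast, zpow_comm, zpow_natCast, hc, one_zpow]⟩⟩

theorem injective_mk_representative (hc : c ^ p = 1) (hc₁ : c ≠ 1) :
    Function.Injective fun i => Quotient.mk (simConj G p) (representative hc i) := by
  intro i j hij
  obtain ⟨g, h₁, h₂⟩ : simConj G p (representative hc i) (representative hc j) :=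
    Quotient.exact hij
  rcases i with _ | _ | ⟨_, k, rfl⟩ <;> rcases j with _ | _ | ⟨t, ht⟩ <;>
    simp only [representative, mul_one, mul_inv_cancel, conj_eq_one_iff] at h₁ h₂
  case none.none | some.none.some.none => rfl
  case none.some.none => exact absurd h₂.symm hc₁
  case some.none.none => exact absurd h₂ hc₁
  case none.some.some | some.none.some.some => exact absurd h₁.symm hc₁
  case some.some.none | some.some.some.none => exact absurd h₁ hc₁
  case some.some.some.some =>
    have hkt : c ^ k = t := by rw [← h₂, ← conj_zpow, h₁]
    simp only [hkt]

theorem surjective_mk_representative (hc : c ^ p = 1)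
    (hconj : ∀ s : G, s ^ p = 1 → s ≠ 1 → IsConj s c)
    (hcent : ∀ t : G, Commute c t → t ^ p = 1 → t ∈ zpowers c) :
    Function.Surjective fun i => Quotient.mk (simConj G p) (representative hc i) := by
  suffices h : ∀ x, ∃ i, simConj G p x (representative hc i) by
    rintro ⟨x⟩
    obtain ⟨i, hi⟩ := h x
    exact ⟨i, (Quotient.sound hi).symm⟩
  rintro ⟨⟨s, t⟩, hst, hs, ht⟩
  by_cases hs₁ : s = 1
  · by_cases ht₁ : t = 1
    · exact ⟨none, 1, by simp [representative, hs₁], by simp [representative, ht₁]⟩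
    · obtain ⟨g, hg⟩ := isConj_iff.mp (hconj t ht ht₁)
      exact ⟨some none, g, by simp [representative, hs₁], hg⟩
  · obtain ⟨g, hg⟩ := isConj_iff.mp (hconj s hs hs₁)
    have hcomm : Commute c (g * t * g⁻¹) := hg ▸ (Commute.conj_iff g).mpr hst
    have htors : (g * t * g⁻¹) ^ p = 1 := by rw [conj_pow, ht, mul_one, mul_inv_cancel]
    exact ⟨some (some ⟨g * t * g⁻¹, hcent _ hcomm htors⟩), g, hg, rfl⟩

theorem card_quotient_simConj (hp : 1 < p) (hc : orderOf c = p)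
    (hconj : ∀ s : G, s ^ p = 1 → s ≠ 1 → IsConj s c)
    (hcent : ∀ t : G, Commute c t → t ^ p = 1 → t ∈ zpowers c) :
    Nat.card (Quotient (simConj G p)) = p + 2 := by
  have hcp : c ^ p = 1 := hc ▸ pow_orderOf_eq_one c
  have hc₁ : c ≠ 1 := fun h => hp.ne' (by rw [← hc, h, orderOf_one])
  have hcard : Nat.card (zpowers c) = p := (Nat.card_zpowers c).trans hc
  have : Finite (zpowers c) := Nat.finite_of_card_ne_zero (by omega)
  rw [← Nat.card_eq_of_bijective _ ⟨injective_mk_representative hcp hc₁,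
    surjective_mk_representative hcp hconj hcent⟩, Finite.card_option,
    Finite.card_option, hcard]

end CommutingTorsionPair

theorem mem_sylow_of_mem_normalizer {G : Type*} [Group G] {p n : ℕ} [Fact p.Prime] (P : Sylow p G)
    {t : G} (ht : t ^ p ^ n = 1) (htP : t ∈ normalizer (P : Set G)) : t ∈ P := by
  obtain ⟨m, -, hm⟩ := (Nat.dvd_prime_pow Fact.out).mp (orderOf_dvd_of_pow_eq_one ht)
  have htp : IsPGroup p (zpowers t) := IsPGroup.of_card ((Nat.card_zpowers t).trans hm)
  have : t ∈ zpowers t ⊓ (P : Subgroup G) :=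
    htp.inf_normalizer_sylow P ▸ mem_inf.mpr ⟨mem_zpowers t, htP⟩
  exact (mem_inf.mp this).2

theorem mem_zpowers_of_commute_of_orderOf_eq {G : Type*} [Group G] [Finite G] {p n : ℕ}
    [Fact p.Prime] {c t : G} (hc : orderOf c = p ^ (Nat.card G).factorization p)
    (hct : Commute c t) (ht : t ^ p ^ n = 1) : t ∈ zpowers c := by
  let P : Sylow p G := Sylow.ofCard (zpowers c) ((Nat.card_zpowers c).trans hc)
  have htP : t ∈ centralizer (zpowers c : Set G) := by
    rintro _ ⟨k, rfl⟩
    exact hct.zpow_left k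
  exact mem_sylow_of_mem_normalizer P ht (centralizer_le_normalizer _ htP)

theorem factorization_factorial_eq_one {p n : ℕ} (hp : p.Prime) (hpn : p ≤ n) (hn : n < 2 * p) :
    n.factorial.factorization p = 1 := by
  have hlog : Nat.log p n < 2 :=
    Nat.log_lt_of_lt_pow (by lia) (hn.trans_le (pow_two p ▸ Nat.mul_le_mul_right p hp.two_le))
  rw [Nat.factorization_factorial hp hlog, Nat.Ico_succ_singleton, Finset.sum_singleton, pow_one]
  exact Nat.div_eq_of_lt_le (by lia) (by lia)

theorem isConj_of_orderOf_eq {α : Type*} [Fintype α] {s t : Equiv.Perm α}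
    (hs : (orderOf s).Prime) (hα : Fintype.card α < 2 * orderOf s) (hst : orderOf s = orderOf t) :
    IsConj s t := by
  classical
  have hsc : s.IsCycle := Equiv.Perm.isCycle_of_prime_order' hs hα
  have htc : t.IsCycle := Equiv.Perm.isCycle_of_prime_order' (hst ▸ hs) (hst ▸ hα)
  rw [hsc.isConj_iff htc, ← hsc.orderOf, ← htc.orderOf, hst]

theorem card_orbits_commuting_p_torsion_pairs_general {α : Type*} [Fintype α] {p : ℕ}
    (hp : p.Prime) (hpα : p ≤ Fintype.card α) (hα : Fintype.card α < 2 * p) :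
    Nat.card (Quotient (CommutingTorsionPair.simConj (Equiv.Perm α) p)) = p + 2 := by
  have : Fact p.Prime := ⟨hp⟩
  have hcard : Nat.card (Equiv.Perm α) = (Fintype.card α).factorial := by
    rw [Nat.card_perm, Nat.card_eq_fintype_card]
  obtain ⟨c, hc⟩ : ∃ c : Equiv.Perm α, orderOf c = p :=
    exists_prime_orderOf_dvd_card' p (hcard ▸ hp.dvd_factorial.mpr hpα)
  refine CommutingTorsionPair.card_quotient_simConj hp.one_lt hc (fun s hs hs₁ => ?_)
    fun t hct ht => ?_
  · have hsp : orderOf s = p := orderOf_eq_prime hs hs₁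
    exact isConj_of_orderOf_eq (hsp ▸ hp) (hsp ▸ hα) (hsp.trans hc.symm)
  · refine mem_zpowers_of_commute_of_orderOf_eq (p := p) (n := 1) ?_ hct (by rwa [pow_one])
    rw [hcard, factorization_factorial_eq_one hp hpα hα, pow_one, hc]

/-- The conjugation action of `Σ_p` on commuting pairs of `p`-torsion elements
has exactly `p + 2` orbits. -/
theorem card_orbits_commuting_p_torsion_pairs (p : ℕ) (hp : p.Prime) :
    Nat.card (Quot (simConjRel p)) = p + 2 :=
  card_orbits_commuting_p_torsion_pairs_general (α := Fin p) hp (by rw [Fintype.card_fin])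
    (by rw [Fintype.card_fin]; have := hp.pos; lia)
end
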